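/- Let (s_ν)_{ν≥1} be a sequence of unit vectors in the real sequence space ℓ₂, let n : ℕ → ℕ with n(ν) ≥ 1, and let ε : ℕ → (0, ∞). For each ν let H_ν = ℝ^{n(ν)}, and let H = ℓ₂ ⊕ H₁ ⊕ H₂ ⊕ ⋯ be the Hilbert (orthogonal, ℓ²-) direct sum, with P : H → ℓ₂ the orthogonal projection onto the ℓ₂ summand. Then for each ν there exist unit vectors g₀^ν, …, g_{n(ν)}^ν forming a basis of the subspace span{s_ν} ⊕ H_ν of H, such that for every ε > 0, every integer m ≥ 1, and every vector w = λ₁ g_{j₁}^{ν₁} + ⋯ + λ_m g_{j_m}^{ν_m} (real scalars λ_k, indices 0 ≤ j_k ≤ n(ν_k)) with n(ν_k) ≥ m and ε(ν_k) < ε for all k = 1, …, m, one has |Pw| ≤ ε √m · |(Id − P)w|. -/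

import Mathlib

noncomputable section

/-- The family of summands: the `none` summand is `ℓ₂`, and the `some ν` summand is
`H_ν = ℝ^{n(ν)}`. -/
def SummandSpace (n : ℕ → ℕ) : Option ℕ → Type
  | none => lp (fun _ : ℕ => ℝ) 2
  | some ν => EuclideanSpace ℝ (Fin (n ν))

instance (n : ℕ → ℕ) : ∀ o, NormedAddCommGroup (SummandSpace n o)
  | none => inferInstanceAs (NormedAddCommGroup (lp (fun _ : ℕ => ℝ) 2))
  | some ν => inferInstanceAs (NormedAddCommGroup (EuclideanSpace ℝ (Fin (n ν))))

instance (n : ℕ → ℕ) : ∀ o, InnerProductSpace ℝ (SummandSpace n o)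
  | none => inferInstanceAs (InnerProductSpace ℝ (lp (fun _ : ℕ => ℝ) 2))
  | some ν => inferInstanceAs (InnerProductSpace ℝ (EuclideanSpace ℝ (Fin (n ν))))

/-- `H = ℓ₂ ⊕ H₁ ⊕ H₂ ⊕ ⋯`, the Hilbert (ℓ²-) direct sum. -/
abbrev BigH (n : ℕ → ℕ) : Type := lp (SummandSpace n) 2

/-- The orthogonal projection `P : H → ℓ₂`-summand (as a map `H → H`). -/
def Pproj (n : ℕ → ℕ) (w : BigH n) : BigH n :=
  lp.single 2 none ((w : ∀ o, SummandSpace n o) none)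

/-- The subspace `span{s_ν} ⊕ H_ν` of `H`. -/
def Uspace (n : ℕ → ℕ) (s : ℕ → lp (fun _ : ℕ => ℝ) 2) (ν : ℕ) :
    Submodule ℝ (BigH n) :=
  Submodule.span ℝ
    ({lp.single 2 none (show SummandSpace n none from s ν)} ∪
      Set.range fun v : EuclideanSpace ℝ (Fin (n ν)) =>
        lp.single 2 (some ν) (show SummandSpace n (some ν) from v))

def eL (n : ℕ → ℕ) (N : ℕ) : EuclideanSpace ℝ (Fin (n N)) ≃ₗᵢ[ℝ] SummandSpace n (some N) :=
  LinearIsometryEquiv.refl ℝ (EuclideanSpace ℝ (Fin (n N)))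
def e0 (n : ℕ → ℕ) : lp (fun _ : ℕ => ℝ) 2 ≃ₗᵢ[ℝ] SummandSpace n none :=
  LinearIsometryEquiv.refl ℝ (lp (fun _ : ℕ => ℝ) 2)

lemma main_num {m : ℕ} (n : ℕ) (hn : 1 ≤ n) (hm : m ≤ n) (N : ℕ) (ν : Fin m → ℕ) (j : Fin m → ℕ)
    (c : Fin m → ℝ) (R : ℝ) (hj : ∀ k, ν k = N → j k ≤ n)
    (hR : ∀ i < n, |∑ k, if ν k = N then c k * (if j k = i then 1 else if j k = n then -1 else 0) else 0| ≤ R) :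
    |∑ k, if ν k = N then c k else 0| ≤ 2 * (n + 1) * R := by
  set μ : ℕ → ℝ := fun a => ∑ k, if ν k = N ∧ j k = a then c k else 0 with hμ
  have h1 : ∀ i < n, |μ i - μ n| ≤ R := by
    intro i hi
    convert hR i hi using 2
    rw [hμ, ← Finset.sum_sub_distrib]
    refine Finset.sum_congr rfl fun k _ => ?_
    by_cases h1 : ν k = N
    · by_cases h2 : j k = i
      · have h3 : i ≠ n := by omega
        simp [h1, h2, h3]
      · by_cases h3 : j k = n
        · have h4 : n ≠ i := by omega
          simp [h1, h3, h4]
        · simp [h1, h2, h3]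
    · simp [h1]
  have h2 : ∑ k, (if ν k = N then c k else 0) = ∑ a ∈ Finset.range (n+1), μ a := by
    rw [hμ, Finset.sum_comm]
    refine Finset.sum_congr rfl fun k _ => ?_
    by_cases h1 : ν k = N
    · simp [h1]
      intro h; have := hj k h1; omega
    · simp [h1]
  obtain ⟨a, ha, ha'⟩ : ∃ a ∈ Finset.range (n+1), a ∉ Finset.univ.image j := by
    by_contra! h
    have := Finset.card_le_card (show Finset.range (n+1) ⊆ Finset.univ.image j from h)
    have h3 := Finset.card_image_le (s := (Finset.univ : Finset (Fin m))) (f := j)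
    simp at this h3
    omega
  have hμa : μ a = 0 := by
    refine Finset.sum_eq_zero fun k _ => ?_
    rw [if_neg]
    rintro ⟨_, h⟩
    exact ha' (by simp [← h])
  simp at ha
  have hR0 : 0 ≤ R := (abs_nonneg _).trans (h1 0 (by omega))
  have hl : |μ n| ≤ R := by
    rcases lt_or_eq_of_le ha with h | h
    · have := h1 a h
      rwa [hμa, zero_sub, abs_neg] at this
    · rw [← h, hμa]; simpa using hR0
  have hall : ∀ i ∈ Finset.range (n+1), |μ i| ≤ 2 * R := by
    intro i hi
    simp at hi
    rcases lt_or_eq_of_le hi with h | h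
    · have := h1 i h
      calc |μ i| = |(μ i - μ n) + μ n| := by ring_nf
        _ ≤ _ := abs_add_le _ _
        _ ≤ _ := by linarith
    · rw [h]; linarith
  rw [h2]
  refine (Finset.abs_sum_le_sum_abs _ _).trans ((Finset.sum_le_sum hall).trans ?_)
  simp; linarith

def uvec (n : ℕ) (a : ℕ) : EuclideanSpace ℝ (Fin n) :=
  WithLp.toLp 2 fun i => if a = i then 1 else if a = n then -1 else 0

def del (n : ℕ → ℕ) (epsf : ℕ → ℝ) (N : ℕ) : ℝ := epsf N / (2 * (n N + 1))

def hvec (n : ℕ → ℕ) (epsf : ℕ → ℝ) (s : ℕ → lp (fun _ : ℕ => ℝ) 2) (N a : ℕ) : BigH n :=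
  lp.single 2 none (del n epsf N • e0 n (s N)) + lp.single 2 (some N) (eL n N (uvec (n N) a))

lemma hvec_none (n : ℕ → ℕ) (epsf : ℕ → ℝ) (s : ℕ → lp (fun _ : ℕ => ℝ) 2) (N a : ℕ) :
    (hvec n epsf s N a : ∀ o, SummandSpace n o) none = del n epsf N • e0 n (s N) := by
  rw [hvec, lp.coeFn_add, Pi.add_apply, lp.single_apply_self, lp.single_apply_ne _ _ _ (by simp),
    add_zero]

lemma hvec_some (n : ℕ → ℕ) (epsf : ℕ → ℝ) (s : ℕ → lp (fun _ : ℕ => ℝ) 2) (N a : ℕ) :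
    (hvec n epsf s N a : ∀ o, SummandSpace n o) (some N) = eL n N (uvec (n N) a) := by
  rw [hvec, lp.coeFn_add, Pi.add_apply, lp.single_apply_self, lp.single_apply_ne _ _ _ (by simp),
    zero_add]

lemma hvec_some_ne (n : ℕ → ℕ) (epsf : ℕ → ℝ) (s : ℕ → lp (fun _ : ℕ => ℝ) 2) (N M a : ℕ)
    (h : N ≠ M) :
    (hvec n epsf s N a : ∀ o, SummandSpace n o) (some M) = 0 := by
  rw [hvec, lp.coeFn_add, Pi.add_apply, lp.single_apply_ne _ _ _ (by simp),
    lp.single_apply_ne _ _ _ (by simpa using h.symm), add_zero]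

lemma hvec_ne (n : ℕ → ℕ) (epsf : ℕ → ℝ) (hepsf : ∀ ν, 0 < epsf ν)
    (s : ℕ → lp (fun _ : ℕ => ℝ) 2) (hs : ∀ ν, ‖s ν‖ = 1) (N a : ℕ) :
    hvec n epsf s N a ≠ 0 := by
  intro h
  have h1 := hvec_none n epsf s N a
  rw [h] at h1
  have h2 := congrArg norm h1
  have : 0 < del n epsf N := div_pos (hepsf N) (by positivity)
  rw [norm_smul, LinearIsometryEquiv.norm_map, hs] at h2
  simp at h2
  exact this.ne' (abs_eq_zero.1 h2.symm)

lemma sum_uvec (n : ℕ) (c : Fin (n+1) → ℝ) (i : Fin n) :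
    (∑ j : Fin (n+1), c j • uvec n j) i = c i.castSucc - c (Fin.last n) := by
  have h0 : ∀ x : Fin n, ((x:ℕ) = n) ↔ False := fun x => by simp [x.2.ne]
  have h1 : ¬ (n = (i:ℕ)) := i.2.ne'
  simp [Fin.sum_univ_castSucc, uvec, h0, h1, Fin.val_inj, sub_eq_add_neg]

lemma hvec_li (n : ℕ → ℕ) (epsf : ℕ → ℝ) (hepsf : ∀ ν, 0 < epsf ν)
    (s : ℕ → lp (fun _ : ℕ => ℝ) 2) (hs : ∀ ν, ‖s ν‖ = 1) (N : ℕ) :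
    LinearIndependent ℝ (fun j : Fin (n N + 1) => hvec n epsf s N j) := by
  rw [Fintype.linearIndependent_iff]
  intro c hc
  have hd : 0 < del n epsf N := div_pos (hepsf N) (by positivity)
  have h1 := congrArg (fun w : BigH n => (w : ∀ o, SummandSpace n o) none) hc
  have h2 := congrArg (fun w : BigH n => (w : ∀ o, SummandSpace n o) (some N)) hc
  simp only [lp.coeFn_sum, Finset.sum_apply, lp.coeFn_smul, Pi.smul_apply, hvec_none, hvec_some,
    lp.coeFn_zero, Pi.zero_apply, ← map_smul, ← map_sum] at h1 h2
  have h3 : ∀ i : Fin (n N), c i.castSucc = c (Fin.last _) := by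
    intro i
    have h4 := (map_eq_zero_iff (eL n N) (eL n N).injective).1 h2
    have := sum_uvec (n N) c i
    rw [h4] at this
    simp at this
    linarith
  have h5 := (map_eq_zero_iff (e0 n) (e0 n).injective).1 h1
  rw [← Finset.sum_smul] at h5
  have hs0 : s N ≠ 0 := by
    intro h; have := hs N; rw [h] at this; simp at this
  have h6 : ∑ j, c j = 0 := by
    rcases smul_eq_zero.1 h5 with h | h
    · exact h
    · exact absurd h (smul_ne_zero hd.ne' hs0)
  rw [Fin.sum_univ_castSucc] at h6
  simp only [h3] at h6
  simp at h6
  have h7 : c (Fin.last _) = 0 := by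
    have : ((n N : ℝ) + 1) * c (Fin.last _) = 0 := by linarith
    rcases mul_eq_zero.1 this with h | h
    · have : (0:ℝ) < (n N : ℝ) + 1 := by positivity
      linarith
    · exact h
  intro i
  induction i using Fin.lastCases with
  | last => exact h7
  | cast i => rw [h3, h7]

lemma hvec_span (n : ℕ → ℕ) (epsf : ℕ → ℝ) (hepsf : ∀ ν, 0 < epsf ν)
    (s : ℕ → lp (fun _ : ℕ => ℝ) 2) (N : ℕ) :
    Submodule.span ℝ (Set.range (fun j : Fin (n N + 1) => hvec n epsf s N j)) = Uspace n s N := by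
  have hd : 0 < del n epsf N := div_pos (hepsf N) (by positivity)
  apply le_antisymm
  · rw [Submodule.span_le]
    rintro _ ⟨j, rfl⟩
    refine Submodule.add_mem _ ?_ ?_
    · rw [lp.single_smul]
      exact Submodule.smul_mem _ _ (Submodule.subset_span (Or.inl rfl))
    · exact Submodule.subset_span (Or.inr ⟨_, rfl⟩)
  · set S := Submodule.span ℝ (Set.range (fun j : Fin (n N + 1) => hvec n epsf s N j)) with hS
    have hmem : ∀ j : Fin (n N + 1), hvec n epsf s N j ∈ S := fun j => Submodule.subset_span ⟨j, rfl⟩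
    have hsum : ∑ j : Fin (n N + 1), hvec n epsf s N j =
        ((n N + 1 : ℝ) * del n epsf N) • lp.single 2 none (e0 n (s N)) := by
      have : ∑ j : Fin (n N + 1), uvec (n N) j = 0 := by
        ext i
        have := sum_uvec (n N) (fun _ => 1) i
        simpa using this
      have h2 : ∑ j : Fin (n N + 1), (lp.single 2 (some N) (eL n N (uvec (n N) j)) : BigH n)
          = 0 := by
        have h3 := map_sum ((lp.lsingle (𝕜 := ℝ) (E := SummandSpace n) 2 (some N)).comp
          (eL n N).toLinearEquiv.toLinearMap) (fun j : Fin (n N + 1) => uvec (n N) j) Finset.univ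
        rw [this, map_zero] at h3
        exact h3.symm
      simp only [hvec, Finset.sum_add_distrib, h2]
      simp [mul_smul, add_smul]
      simp [← Nat.cast_smul_eq_nsmul ℝ]
    have hs1 : (lp.single 2 none (e0 n (s N)) : BigH n) ∈ S := by
      have h1 : ∑ j : Fin (n N + 1), hvec n epsf s N j ∈ S := Submodule.sum_mem _ fun j _ => hmem j
      rw [hsum] at h1
      exact (Submodule.smul_mem_iff _ (by positivity)).1 h1
    have hu : ∀ j : Fin (n N + 1), (lp.single 2 (some N) (eL n N (uvec (n N) j)) : BigH n) ∈ S := by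
      intro j
      have := Submodule.sub_mem _ (hmem j) (Submodule.smul_mem _ (del n epsf N) hs1)
      rw [hvec, lp.single_smul, add_sub_cancel_left] at this
      exact this
    rw [Uspace, Submodule.span_le]
    rintro _ (h | ⟨v, rfl⟩)
    · rw [h]; exact hs1
    · have hv : v = ∑ i : Fin (n N), v i • uvec (n N) (i.castSucc : Fin (n N + 1)) := by
        ext i
        have := sum_uvec (n N) (Fin.snoc (fun i => v i) 0) i
        rw [Fin.sum_univ_castSucc] at this
        simpa using this.symm
      have h3 := map_sum ((lp.lsingle (𝕜 := ℝ) (E := SummandSpace n) 2 (some N)).comp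
          (eL n N).toLinearEquiv.toLinearMap)
          (fun i : Fin (n N) => v i • uvec (n N) (i.castSucc : Fin (n N + 1))) Finset.univ
      rw [← hv] at h3
      have h4 : (lp.single 2 (some N) (eL n N v) : BigH n) ∈ S := by
        refine Eq.mpr (congrArg (· ∈ S) h3) ?_
        refine Submodule.sum_mem _ fun i _ => ?_
        rw [map_smul]
        exact Submodule.smul_mem _ _ (hu _)
      exact h4

lemma hvec_est (n : ℕ → ℕ) (hn : ∀ ν, 1 ≤ n ν) (epsf : ℕ → ℝ) (hepsf : ∀ ν, 0 < epsf ν)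
    (s : ℕ → lp (fun _ : ℕ => ℝ) 2) (hs : ∀ ν, ‖s ν‖ = 1) (ε : ℝ) (hε : 0 < ε) (m : ℕ)
    (ν : Fin m → ℕ) (j : Fin m → ℕ) (hj : ∀ k, j k ≤ n (ν k)) (c : Fin m → ℝ)
    (hm : ∀ k, m ≤ n (ν k)) (he : ∀ k, epsf (ν k) < ε) (w : BigH n)
    (hw : w = ∑ k, c k • hvec n epsf s (ν k) (j k)) :
    ‖Pproj n w‖ ≤ ε * Real.sqrt m * ‖w - Pproj n w‖ := by
  set T : Finset ℕ := Finset.univ.image ν with hT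
  have hd : ∀ N, 0 < del n epsf N := fun N => div_pos (hepsf N) (by positivity)
  have hsome : ∀ N, (w : ∀ o, SummandSpace n o) (some N) =
      eL n N (∑ k, if ν k = N then c k • uvec (n N) (j k) else 0) := by
    intro N
    rw [hw, lp.coeFn_sum, Finset.sum_apply, map_sum]
    refine Finset.sum_congr rfl fun k _ => ?_
    rw [lp.coeFn_smul, Pi.smul_apply]
    split_ifs with h
    · subst h
      rw [hvec_some, map_smul]
    · rw [hvec_some_ne _ _ _ _ _ _ h, smul_zero, map_zero]
  have hnone : (w : ∀ o, SummandSpace n o) none =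
      ∑ N ∈ T, ((∑ k, if ν k = N then c k else 0) * del n epsf N) • e0 n (s N) := by
    rw [hw, lp.coeFn_sum, Finset.sum_apply]
    simp only [Finset.sum_mul, Finset.sum_smul]
    rw [Finset.sum_comm]
    refine Finset.sum_congr rfl fun k _ => ?_
    rw [lp.coeFn_smul, Pi.smul_apply, hvec_none, Finset.sum_eq_single (ν k)]
    · simp [mul_smul]
    · intro b _ hb
      simp [hb.symm]
    · intro h
      exact absurd (Finset.mem_image_of_mem ν (Finset.mem_univ k)) h
  have hbd : ∀ N ∈ T, ‖((∑ k, if ν k = N then c k else 0) * del n epsf N) • e0 n (s N)‖ ≤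
      ε * ‖(w : ∀ o, SummandSpace n o) (some N)‖ := by
    intro N hN
    obtain ⟨k0, -, hk0⟩ := Finset.mem_image.1 hN
    have hmain := main_num (n N) (hn N) (hk0 ▸ hm k0) N ν j c
      ‖(w : ∀ o, SummandSpace n o) (some N)‖ (fun k hk => hk ▸ hj k) (by
        intro i hi
        rw [hsome, LinearIsometryEquiv.norm_map]
        refine le_trans (le_of_eq ?_) (PiLp.norm_apply_le _ (⟨i, hi⟩ : Fin (n N)))
        rw [Real.norm_eq_abs]
        congr 1
        simp only [WithLp.ofLp_sum, Finset.sum_apply]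
        refine Finset.sum_congr rfl fun k _ => ?_
        split_ifs <;> simp_all [uvec])
    rw [norm_smul, LinearIsometryEquiv.norm_map, hs, mul_one, Real.norm_eq_abs, abs_mul,
      abs_of_pos (hd N)]
    calc _ ≤ 2 * ((n N : ℝ) + 1) * ‖(w : ∀ o, SummandSpace n o) (some N)‖ * del n epsf N :=
          mul_le_mul_of_nonneg_right hmain (hd N).le
      _ = epsf N * ‖(w : ∀ o, SummandSpace n o) (some N)‖ := by
          unfold del; field_simp
      _ ≤ _ := mul_le_mul_of_nonneg_right (hk0 ▸ (he k0).le) (norm_nonneg _)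
  have hP : ‖Pproj n w‖ ≤ ε * ∑ N ∈ T, ‖(w : ∀ o, SummandSpace n o) (some N)‖ := by
    rw [Pproj, lp.norm_single (by norm_num), hnone, Finset.mul_sum]
    exact (norm_sum_le _ _).trans (Finset.sum_le_sum hbd)
  have hQ : ∑ N ∈ T, ‖(w : ∀ o, SummandSpace n o) (some N)‖ ^ 2 ≤ ‖w - Pproj n w‖ ^ 2 := by
    have h := lp.sum_rpow_le_norm_rpow (p := 2) (by norm_num) (w - Pproj n w)
      (T.map Function.Embedding.some)
    rw [Finset.sum_map] at h
    simp only [ENNReal.toReal_ofNat, Real.rpow_ofNat] at h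
    refine le_trans (le_of_eq ?_) h
    refine Finset.sum_congr rfl fun N _ => ?_
    congr 2
    rw [lp.coeFn_sub, Pi.sub_apply, Pproj]
    erw [lp.single_apply_ne _ _ _ (by simp)]
    rw [sub_zero]
    rfl
  have hcard : (T.card : ℝ) ≤ m := by
    have := Finset.card_image_le (s := (Finset.univ : Finset (Fin m))) (f := ν)
    simp at this
    exact_mod_cast this
  have hcs : ∑ N ∈ T, ‖(w : ∀ o, SummandSpace n o) (some N)‖ ≤ Real.sqrt m * ‖w - Pproj n w‖ := by
    refine le_of_abs_le (abs_le_of_sq_le_sq ?_ (by positivity))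
    rw [mul_pow, Real.sq_sqrt (by positivity)]
    refine sq_sum_le_card_mul_sum_sq.trans ?_
    exact mul_le_mul hcard hQ (by positivity) (by positivity)
  rw [mul_assoc]
  exact hP.trans (mul_le_mul_of_nonneg_left hcs hε.le)

theorem stmt17 (n : ℕ → ℕ) (hn : ∀ ν, 1 ≤ n ν)
    (epsf : ℕ → ℝ) (hepsf : ∀ ν, 0 < epsf ν)
    (s : ℕ → lp (fun _ : ℕ => ℝ) 2) (hs : ∀ ν, ‖s ν‖ = 1) :
    ∃ g : (ν : ℕ) → Fin (n ν + 1) → BigH n,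
      (∀ ν j, ‖g ν j‖ = 1) ∧
      (∀ ν, LinearIndependent ℝ (g ν)) ∧
      (∀ ν, Submodule.span ℝ (Set.range (g ν)) = Uspace n s ν) ∧
      ∀ ε : ℝ, 0 < ε → ∀ m : ℕ, 1 ≤ m →
        ∀ (ν : Fin m → ℕ) (j : ∀ k : Fin m, Fin (n (ν k) + 1)) (lam : Fin m → ℝ),
          (∀ k, m ≤ n (ν k)) → (∀ k, epsf (ν k) < ε) →
          ‖Pproj n (∑ k, lam k • g (ν k) (j k))‖ ≤
            ε * Real.sqrt m *
              ‖(∑ k, lam k • g (ν k) (j k)) - Pproj n (∑ k, lam k • g (ν k) (j k))‖ := by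
  have hne : ∀ N a, ‖hvec n epsf s N a‖ ≠ 0 := fun N a =>
    norm_ne_zero_iff.2 (hvec_ne n epsf hepsf s hs N a)
  let u : (ν : ℕ) → Fin (n ν + 1) → ℝˣ := fun ν j =>
    Units.mk0 (‖hvec n epsf s ν j‖⁻¹) (inv_ne_zero (hne ν j))
  refine ⟨fun ν j => ‖hvec n epsf s ν j‖⁻¹ • hvec n epsf s ν j, ?_, ?_, ?_, ?_⟩
  · intro ν j
    rw [norm_smul, norm_inv, norm_norm, inv_mul_cancel₀ (hne _ _)]
  · intro ν
    exact (hvec_li n epsf hepsf s hs ν).units_smul (u ν)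
  · intro ν
    rw [← hvec_span n epsf hepsf s ν]
    apply le_antisymm
    · rw [Submodule.span_le]
      rintro _ ⟨j, rfl⟩
      exact Submodule.smul_mem _ _ (Submodule.subset_span ⟨j, rfl⟩)
    · rw [Submodule.span_le]
      rintro _ ⟨j, rfl⟩
      exact (Submodule.smul_mem_iff _ (inv_ne_zero (hne ν j))).1 (Submodule.subset_span ⟨j, rfl⟩)
  · intro ε hε m _ ν j lam hm he
    refine hvec_est n hn epsf hepsf s hs ε hε m ν (fun k => j k)
      (fun k => Nat.lt_succ_iff.1 (j k).2)
      (fun k => lam k * ‖hvec n epsf s (ν k) (j k)‖⁻¹) hm he _ ?_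
    simp only [mul_smul]
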